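/- arXiv:1912.08719 — 3 statements merged into one kernel-verified Lean document; each statement's English description precedes it below -/
import Mathlib

section
/- Let λ > 0, λ̄ > 0, μ > 0, μ̄ > 0, d > 0 and 0 ≤ a < b. Let ψ : ℝ → ℝ be bounded, measurable, continuous on [0,∞), and differentiable on [a,b], and suppose that for all x ∈ [a,b]: d·ψ′(x) + (λ+λ̄)·ψ(x) = (λ/μ)·e^{−x/μ}·∫_0^x ψ(u)·e^{u/μ} du + λ·e^{−x/μ} + (λ̄/μ̄)·e^{x/μ̄}·∫_x^∞ ψ(u)·e^{−u/μ̄} du. Then ψ is twice differentiable on [a,b] and for all x ∈ [a,b]: d·μ·ψ″(x) + (d + μ(λ+λ̄))·ψ′(x) + λ̄·(1 + μ/μ̄)·ψ(x) = (λ̄/μ̄)·(1 + μ/μ̄)·e^{x/μ̄}·∫_x^∞ ψ(u)·e^{−u/μ̄} du. -/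
open Real Set intervalIntegral

/-!
Let `Q x` and `P x` be the mean values of `ψ` after a single claim, resp. premium, at surplus `x`.
Since the jumps are exponential, `mu Q' = ψ - Q` and `muBar P' = P - ψ`, while the hypothesis reads
`d ψ' + (lam + lamBar) ψ = lam Q + lamBar P`. The right-hand side is differentiable, hence so is
`ψ'`; differentiating and eliminating `Q` by means of the equation itself leaves a second-order
equation in which `P` is the only nonlocal term.
-/

open MeasureTheory

section Primitives

variable {E : Type*} [NormedAddCommGroup E] [NormedSpace ℝ E] [CompleteSpace E]
  {f : ℝ → E} {a b c x : ℝ}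

theorem hasDerivWithinAt_integral_Icc (hint : IntervalIntegrable f volume c a)
    (hcont : ContinuousOn f (Icc a b)) (hx : x ∈ Icc a b) :
    HasDerivWithinAt (fun y => ∫ u in c..y, f u) (f x) (Icc a b) x := by
  have : Fact (x ∈ Icc a b) := ⟨hx⟩
  have hax : IntervalIntegrable f volume a x :=
    (hcont.mono (Icc_subset_Icc_right hx.2)).intervalIntegrable_of_Icc hx.1
  exact integral_hasDerivWithinAt_right (hint.trans hax)
    (hcont.stronglyMeasurableAtFilter_nhdsWithin measurableSet_Icc x) (hcont x hx)

theorem hasDerivWithinAt_integral_Ioi (hint : IntegrableOn f (Ioi a))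
    (hcont : ContinuousOn f (Icc a b)) (hx : x ∈ Icc a b) :
    HasDerivWithinAt (fun y => ∫ u in Ioi y, f u) (-f x) (Icc a b) x := by
  have hsplit : ∀ y ∈ Icc a b,
      ∫ u in Ioi y, f u = (∫ u in Ioi a, f u) - ∫ u in a..y, f u := fun y hy => by
    rw [← integral_Ioi_sub_Ioi hint hy.1, sub_sub_cancel]
  exact ((hasDerivWithinAt_integral_Icc .refl hcont hx).const_sub _).congr_of_mem hsplit hx

end Primitives

theorem integrableOn_mul_exp_neg_div_Ioi {f : ℝ → ℝ} {c m M : ℝ} (hm : 0 < m)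
    (hmeas : AEStronglyMeasurable f (volume.restrict (Ioi c)))
    (hbdd : ∀ᵐ u ∂volume.restrict (Ioi c), |f u| ≤ M) :
    IntegrableOn (fun u => f u * exp (-u / m)) (Ioi c) := by
  have hexp : IntegrableOn (fun u => exp (-u / m)) (Ioi c) := by
    simpa only [neg_mul, inv_mul_eq_div, ← neg_div] using
      integrableOn_exp_mul_Ioi (neg_neg_of_pos (inv_pos.mpr hm)) c
  exact hexp.bdd_mul hmeas hbdd

/-- Variation of constants for `y' = y / m + g`. -/
theorem hasDerivWithinAt_exp_div_mul {F : ℝ → ℝ} {g m x : ℝ} {s : Set ℝ}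
    (hF : HasDerivWithinAt F (g * exp (-x / m)) s x) :
    HasDerivWithinAt (fun y => exp (y / m) * F y) (exp (x / m) * F x / m + g) s x := by
  have hexp : HasDerivWithinAt (fun y => exp (y / m)) (exp (x / m) * (1 / m)) s x :=
    ((hasDerivWithinAt_id x s).div_const m).exp
  have hcancel : exp (x / m) * exp (-x / m) = 1 := by
    rw [← exp_add, neg_div, add_neg_cancel, exp_zero]
  exact (hexp.mul hF).congr_deriv (by linear_combination g * hcancel)

/-- The mean of `ψ (x - Y)` for an exponential claim `Y` of mean `mu`, where `ψ` is taken to be `1`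
(ruin has occurred) on the negative half-line; the substitution `u = x - Y` has been made. -/
noncomputable def claimMean (mu : ℝ) (ψ : ℝ → ℝ) (x : ℝ) : ℝ :=
  exp (-x / mu) * (mu⁻¹ * (∫ u in (0 : ℝ)..x, ψ u * exp (u / mu)) + 1)

/-- The mean of `ψ (x + Y)` for an exponential premium `Y` of mean `muBar`, after the substitution
`u = x + Y`. -/
noncomputable def premiumMean (muBar : ℝ) (ψ : ℝ → ℝ) (x : ℝ) : ℝ :=
  exp (x / muBar) * (muBar⁻¹ * ∫ u in Ioi x, ψ u * exp (-u / muBar))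

section Means

variable {ψ : ℝ → ℝ} {a b x : ℝ}

theorem hasDerivWithinAt_claimMean (mu : ℝ) (hint : IntervalIntegrable ψ volume 0 a)
    (hcont : ContinuousOn ψ (Icc a b)) (hx : x ∈ Icc a b) :
    HasDerivWithinAt (claimMean mu ψ) ((ψ x - claimMean mu ψ x) / mu) (Icc a b) x := by
  have hexp : Continuous fun u => exp (u / mu) := by fun_prop
  have hprim := ((hasDerivWithinAt_integral_Icc (hint.mul_continuousOn hexp.continuousOn)
    (hcont.mul hexp.continuousOn) hx).const_mul mu⁻¹).add_const 1
  have hderiv := hasDerivWithinAt_exp_div_mul (m := -mu) (g := mu⁻¹ * ψ x)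
    (hprim.congr_deriv (by rw [neg_div_neg_eq, mul_assoc]))
  simp only [div_neg, ← neg_div] at hderiv
  exact hderiv.congr_deriv (by rw [claimMean]; ring)

theorem hasDerivWithinAt_premiumMean {muBar : ℝ}
    (hint : IntegrableOn (fun u => ψ u * exp (-u / muBar)) (Ioi a))
    (hcont : ContinuousOn ψ (Icc a b)) (hx : x ∈ Icc a b) :
    HasDerivWithinAt (premiumMean muBar ψ) ((premiumMean muBar ψ x - ψ x) / muBar)
      (Icc a b) x := by
  have hexp : Continuous fun u => exp (-u / muBar) := by fun_prop
  have hprim := (hasDerivWithinAt_integral_Ioi hint (hcont.mul hexp.continuousOn) hx).const_mul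
    muBar⁻¹
  have hderiv := hasDerivWithinAt_exp_div_mul (m := muBar) (g := -(muBar⁻¹ * ψ x))
    (hprim.congr_deriv (by ring))
  exact hderiv.congr_deriv (by rw [premiumMean]; ring)

end Means

theorem stmt_3_general (lam lamBar mu muBar d a b : ℝ)
    (hmu : mu ≠ 0) (hmuBar : muBar ≠ 0) (hd : d ≠ 0)
    (ψ ψ' : ℝ → ℝ)
    (hint : IntervalIntegrable ψ volume 0 a)
    (htail : IntegrableOn (fun u => ψ u * exp (-u / muBar)) (Ioi a))
    (hdiff : ∀ x ∈ Icc a b, HasDerivWithinAt ψ (ψ' x) (Icc a b) x)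
    (heq : ∀ x ∈ Icc a b,
      d * ψ' x + (lam + lamBar) * ψ x
        = lam / mu * exp (-x / mu) * (∫ u in (0 : ℝ)..x, ψ u * exp (u / mu))
          + lam * exp (-x / mu)
          + lamBar / muBar * exp (x / muBar) * ∫ u in Ioi x, ψ u * exp (-u / muBar)) :
    ∃ ψ'' : ℝ → ℝ, ∀ x ∈ Icc a b,
      HasDerivWithinAt ψ' (ψ'' x) (Icc a b) x ∧
      d * mu * ψ'' x + (d + mu * (lam + lamBar)) * ψ' x + lamBar * (1 + mu / muBar) * ψ x
        = lamBar / muBar * (1 + mu / muBar) * exp (x / muBar)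
            * ∫ u in Ioi x, ψ u * exp (-u / muBar) := by
  set Q := claimMean mu ψ with hQ
  set P := premiumMean muBar ψ with hP
  have hcont : ContinuousOn ψ (Icc a b) := fun x hx => (hdiff x hx).continuousWithinAt
  have hbalance : ∀ x ∈ Icc a b,
      d * ψ' x + (lam + lamBar) * ψ x = lam * Q x + lamBar * P x := fun x hx => by
    rw [heq x hx, hQ, hP, claimMean, premiumMean]; ring
  have hψ' : ∀ x ∈ Icc a b,
      ψ' x = (lam * Q x + lamBar * P x - (lam + lamBar) * ψ x) / d := fun x hx => by
    rw [eq_div_iff hd]; linear_combination hbalance x hx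
  refine ⟨fun x => (lam * ((ψ x - Q x) / mu) + lamBar * ((P x - ψ x) / muBar)
    - (lam + lamBar) * ψ' x) / d, fun x hx => ⟨?_, ?_⟩⟩
  · have hQ' := (hasDerivWithinAt_claimMean mu hint hcont hx).const_mul lam
    have hP' := (hasDerivWithinAt_premiumMean htail hcont hx).const_mul lamBar
    exact (((hQ'.add hP').sub ((hdiff x hx).const_mul _)).div_const d).congr_of_mem hψ' hx
  · calc
      _ = lamBar * (1 + mu / muBar) * P x := by
        field_simp
        linear_combination muBar * hbalance x hx
      _ = _ := by rw [hP, premiumMean]; ring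

theorem stmt_3 (lam lamBar mu muBar d a b : ℝ)
    (hlam : 0 < lam) (hlamBar : 0 < lamBar) (hmu : 0 < mu) (hmuBar : 0 < muBar)
    (hd : 0 < d) (ha : 0 ≤ a) (hab : a < b)
    (ψ ψ' : ℝ → ℝ)
    (hbdd : ∃ M : ℝ, ∀ x, |ψ x| ≤ M)
    (hmeas : Measurable ψ)
    (hcont : ContinuousOn ψ (Set.Ici 0))
    (hdiff : ∀ x ∈ Set.Icc a b, HasDerivWithinAt ψ (ψ' x) (Set.Icc a b) x)
    (heq : ∀ x ∈ Set.Icc a b,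
      d * ψ' x + (lam + lamBar) * ψ x
        = lam / mu * Real.exp (-x / mu) * (∫ u in (0 : ℝ)..x, ψ u * Real.exp (u / mu))
          + lam * Real.exp (-x / mu)
          + lamBar / muBar * Real.exp (x / muBar)
              * ∫ u in Set.Ioi x, ψ u * Real.exp (-u / muBar)) :
    ∃ ψ'' : ℝ → ℝ, ∀ x ∈ Set.Icc a b,
      HasDerivWithinAt ψ' (ψ'' x) (Set.Icc a b) x ∧
      d * mu * ψ'' x + (d + mu * (lam + lamBar)) * ψ' x + lamBar * (1 + mu / muBar) * ψ x
        = lamBar / muBar * (1 + mu / muBar) * Real.exp (x / muBar)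
            * ∫ u in Set.Ioi x, ψ u * Real.exp (-u / muBar) := by
  obtain ⟨M, hM⟩ := hbdd
  exact stmt_3_general lam lamBar mu muBar d a b hmu.ne' hmuBar.ne' hd.ne' ψ ψ'
    ((hcont.mono Icc_subset_Ici_self).intervalIntegrable_of_Icc ha)
    (integrableOn_mul_exp_neg_div_Ioi hmuBar hmeas.aestronglyMeasurable (.of_forall hM)) hdiff heq
end

section
/- Let λ > 0, λ̄ > 0, μ > 0, μ̄ > 0, d > 0, δ > 0 and 0 ≤ a < b. Let v : ℝ → ℝ be bounded, measurable, continuous on [0,∞), and differentiable on [a,b], and suppose that for all x ∈ [a,b]: d·v′(x) + (λ+λ̄+δ)·v(x) = (λ/μ)·e^{−x/μ}·∫_0^x v(u)·e^{u/μ} du + (λ̄/μ̄)·e^{x/μ̄}·∫_x^∞ v(u)·e^{−u/μ̄} du + d. Then v is three times differentiable on [a,b] and for all x ∈ [a,b]: d·μ·μ̄·v‴(x) + ( d·(μ̄−μ) + μ·μ̄·(λ+λ̄+δ) )·v″(x) + ( μ̄·(λ̄+δ) − μ·(λ+δ) − d )·v′(x) − δ·v(x) = −d. -/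
open Real Set intervalIntegral

/-!
Write `D` for differentiation. With `P x = E[v (x - Y); Y ≤ x]` and `Q x = E[v (x + Z)]` for
exponential `Y` and `Z` of means `μ` and `ν`, the hypothesis reads `d v' + κ v = p P + q Q + d`
with constants `κ`, `p`, `q`. Exponential averages obey `(μ D + 1) P = v` and
`(ν D - 1) Q = -v`. Hence the right-hand side is differentiable, which makes `v'`
differentiable, and then once more; applying `(μ D + 1) (ν D - 1)` to the relation
eliminates `P` and `Q`.
-/

section IntegralDerivatives

open MeasureTheory

variable {E : Type*} [NormedAddCommGroup E] [NormedSpace ℝ E] [CompleteSpace E]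
  {f : ℝ → E} {a b c x : ℝ}

theorem hasDerivWithinAt_integral_right_Icc (hca : IntervalIntegrable f volume c a)
    (hf : ContinuousOn f (Icc a b)) (hx : x ∈ Icc a b) :
    HasDerivWithinAt (fun y => ∫ u in c..y, f u) (f x) (Icc a b) x := by
  have hax : IntervalIntegrable f volume a x :=
    (hf.mono (Icc_subset_Icc_right hx.2)).intervalIntegrable_of_Icc hx.1
  have : Fact (x ∈ Icc a b) := ⟨hx⟩
  exact integral_hasDerivWithinAt_right (hca.trans hax)
    (hf.stronglyMeasurableAtFilter_nhdsWithin measurableSet_Icc x) (hf x hx)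

theorem hasDerivWithinAt_integral_Ioi_Icc (hint : IntegrableOn f (Ioi a))
    (hf : ContinuousOn f (Icc a b)) (hx : x ∈ Icc a b) :
    HasDerivWithinAt (fun y => ∫ u in Ioi y, f u) (-f x) (Icc a b) x := by
  have tail_eq : ∀ y ∈ Icc a b, ∫ u in Ioi y, f u = (∫ u in Ioi a, f u) - ∫ u in a..y, f u :=
    fun y hy => eq_sub_of_add_eq' <|
      integral_interval_add_Ioi hint (hint.mono_set (Ioi_subset_Ioi hy.1))
  exact ((hasDerivWithinAt_integral_right_Icc .refl hf hx).const_sub _).congr_of_mem tail_eq hx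

theorem integrableOn_Ioi_mul_exp_neg_div {v : ℝ → ℝ} {nu M : ℝ} (hnu : 0 < nu)
    (hv : AEStronglyMeasurable v (volume.restrict (Ioi c)))
    (hM : ∀ᵐ u ∂volume.restrict (Ioi c), ‖v u‖ ≤ M) :
    IntegrableOn (fun u => v u * exp (-u / nu)) (Ioi c) := by
  have hexp : IntegrableOn (fun u => exp (-u / nu)) (Ioi c) := by
    simpa only [neg_mul, mul_neg, div_eq_inv_mul] using
      exp_neg_integrableOn_Ioi c (inv_pos.mpr hnu)
  exact hexp.bdd_mul hv hM

end IntegralDerivatives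

section ExponentialJumps

open MeasureTheory

/-- The expectation of `v (x - Y)` on the event `Y ≤ x`, for an exponential claim `Y` of
mean `mu`, written after the substitution `u = x - Y`. -/
noncomputable def meanAfterClaim (mu : ℝ) (v : ℝ → ℝ) (x : ℝ) : ℝ :=
  mu⁻¹ * exp (-x / mu) * ∫ u in (0 : ℝ)..x, v u * exp (u / mu)

/-- The expectation of `v (x + Z)` for an exponential premium `Z` of mean `nu`, written after
the substitution `u = x + Z`. -/
noncomputable def meanAfterPremium (nu : ℝ) (v : ℝ → ℝ) (x : ℝ) : ℝ :=
  nu⁻¹ * exp (x / nu) * ∫ u in Ioi x, v u * exp (-u / nu)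

theorem hasDerivWithinAt_const_mul_exp_div_mul {F : ℝ → ℝ} {s : Set ℝ} {x y m c : ℝ}
    (hF : HasDerivWithinAt F (y * exp (-x / m)) s x) :
    HasDerivWithinAt (fun t => c * exp (t / m) * F t)
      (c * exp (x / m) * F x / m + c * y) s x := by
  have hexp : HasDerivWithinAt (fun t => c * exp (t / m)) (c * (exp (x / m) * (1 / m))) s x :=
    (((hasDerivWithinAt_id x s).div_const m).exp).const_mul c
  have exp_cancel : exp (x / m) * exp (-x / m) = 1 := by
    rw [← exp_add, neg_div, add_neg_cancel, exp_zero]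
  refine (hexp.mul hF).congr_deriv ?_
  linear_combination c * y * exp_cancel

variable {v : ℝ → ℝ} {a b x : ℝ}

theorem hasDerivWithinAt_meanAfterClaim {mu : ℝ} (h0a : IntervalIntegrable v volume 0 a)
    (hv : ContinuousOn v (Icc a b)) (hx : x ∈ Icc a b) :
    HasDerivWithinAt (meanAfterClaim mu v) ((v x - meanAfterClaim mu v x) / mu) (Icc a b) x := by
  have hexp : Continuous fun u => exp (u / mu) := by fun_prop
  have hF : HasDerivWithinAt (fun y => ∫ u in (0 : ℝ)..y, v u * exp (u / mu))
      (v x * exp (-x / -mu)) (Icc a b) x := by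
    rw [neg_div_neg_eq]
    exact hasDerivWithinAt_integral_right_Icc (h0a.mul_continuousOn hexp.continuousOn)
      (hv.mul hexp.continuousOn) hx
  have h := hasDerivWithinAt_const_mul_exp_div_mul (c := mu⁻¹) hF
  simp only [div_neg, ← neg_div] at h
  refine h.congr_deriv ?_
  rw [meanAfterClaim]
  ring

theorem hasDerivWithinAt_meanAfterPremium {nu : ℝ}
    (htail : IntegrableOn (fun u => v u * exp (-u / nu)) (Ioi a))
    (hv : ContinuousOn v (Icc a b)) (hx : x ∈ Icc a b) :
    HasDerivWithinAt (meanAfterPremium nu v) ((meanAfterPremium nu v x - v x) / nu)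
      (Icc a b) x := by
  have hexp : Continuous fun u => exp (-u / nu) := by fun_prop
  have hF := hasDerivWithinAt_integral_Ioi_Icc htail (hv.mul hexp.continuousOn) hx
  rw [← neg_mul] at hF
  refine (hasDerivWithinAt_const_mul_exp_div_mul (c := nu⁻¹) hF).congr_deriv ?_
  rw [meanAfterPremium]
  ring

end ExponentialJumps

section Elimination

variable {𝕜 : Type*} [NontriviallyNormedField 𝕜] {s : Set 𝕜} {d κ : 𝕜}

theorem hasDerivWithinAt_deriv_of_first_order_eq {v v' R : 𝕜 → 𝕜} {R' x : 𝕜} (hd : d ≠ 0)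
    (heq : ∀ y ∈ s, d * v' y + κ * v y = R y) (hx : x ∈ s)
    (hv : HasDerivWithinAt v (v' x) s x) (hR : HasDerivWithinAt R R' s x) :
    HasDerivWithinAt v' ((R' - κ * v' x) / d) s x := by
  have solve_v' : ∀ y ∈ s, v' y = (R y - κ * v y) / d := fun y hy => by
    rw [eq_div_iff hd, mul_comm]
    exact eq_sub_of_add_eq (heq y hy)
  exact ((hR.sub (hv.const_mul κ)).div_const d).congr_of_mem solve_v' hx

theorem exists_third_order_eq_of_relaxation {v v' P Q : 𝕜 → 𝕜} {p q c mu nu : 𝕜}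
    (hd : d ≠ 0) (hmu : mu ≠ 0) (hnu : nu ≠ 0)
    (hv : ∀ x ∈ s, HasDerivWithinAt v (v' x) s x)
    (hP : ∀ x ∈ s, HasDerivWithinAt P ((v x - P x) / mu) s x)
    (hQ : ∀ x ∈ s, HasDerivWithinAt Q ((Q x - v x) / nu) s x)
    (heq : ∀ x ∈ s, d * v' x + κ * v x = p * P x + q * Q x + c) :
    ∃ v'' v''' : 𝕜 → 𝕜, ∀ x ∈ s,
      HasDerivWithinAt v' (v'' x) s x ∧
      HasDerivWithinAt v'' (v''' x) s x ∧
      d * mu * nu * v''' x + (d * (nu - mu) + mu * nu * κ) * v'' x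
        + (nu * (κ - p) - mu * (κ - q) - d) * v' x - (κ - p - q) * v x = -c := by
  let R' x := p * ((v x - P x) / mu) + q * ((Q x - v x) / nu)
  let R'' x := p * ((v' x - (v x - P x) / mu) / mu) + q * (((Q x - v x) / nu - v' x) / nu)
  let v'' x := (R' x - κ * v' x) / d
  let v''' x := (R'' x - κ * v'' x) / d
  have hR : ∀ x ∈ s, HasDerivWithinAt (fun y => p * P y + q * Q y + c) (R' x) s x :=
    fun x hx => (((hP x hx).const_mul p).add ((hQ x hx).const_mul q)).add_const c
  have hR' : ∀ x ∈ s, HasDerivWithinAt R' (R'' x) s x := fun x hx =>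
    ((((hv x hx).sub (hP x hx)).div_const mu).const_mul p).add
      ((((hQ x hx).sub (hv x hx)).div_const nu).const_mul q)
  have hv' : ∀ x ∈ s, HasDerivWithinAt v' (v'' x) s x := fun x hx =>
    hasDerivWithinAt_deriv_of_first_order_eq hd heq hx (hv x hx) (hR x hx)
  have heq' : ∀ x, d * v'' x + κ * v' x = R' x := fun x => by
    rw [mul_div_cancel₀ _ hd, sub_add_cancel]
  have heq'' : ∀ x, d * v''' x + κ * v'' x = R'' x := fun x => by
    rw [mul_div_cancel₀ _ hd, sub_add_cancel]
  have hv'' : ∀ x ∈ s, HasDerivWithinAt v'' (v''' x) s x := fun x hx =>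
    hasDerivWithinAt_deriv_of_first_order_eq hd (fun y _ => heq' y) hx (hv' x hx) (hR' x hx)
  have eliminate : ∀ x, mu * nu * R'' x + (nu - mu) * R' x - (p * P x + q * Q x) =
      (p * nu - q * mu) * v' x - (p + q) * v x := fun x => by
    simp only [R', R'']
    field_simp
    ring
  refine ⟨v'', v''', fun x hx => ⟨hv' x hx, hv'' x hx, ?_⟩⟩
  linear_combination mu * nu * heq'' x + (nu - mu) * heq' x - heq x hx + eliminate x

end Elimination

theorem stmt_5_general {lam lamBar mu muBar d δ a b : ℝ} {v v' : ℝ → ℝ}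
    (hmu : mu ≠ 0) (hmuBar : muBar ≠ 0) (hd : d ≠ 0)
    (h0a : IntervalIntegrable v MeasureTheory.volume 0 a)
    (htail : MeasureTheory.IntegrableOn (fun u => v u * exp (-u / muBar)) (Ioi a))
    (hdiff : ∀ x ∈ Icc a b, HasDerivWithinAt v (v' x) (Icc a b) x)
    (heq : ∀ x ∈ Icc a b,
      d * v' x + (lam + lamBar + δ) * v x
        = lam / mu * exp (-x / mu) * (∫ u in (0 : ℝ)..x, v u * exp (u / mu))
          + lamBar / muBar * exp (x / muBar) * (∫ u in Ioi x, v u * exp (-u / muBar))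
          + d) :
    ∃ v'' v''' : ℝ → ℝ, ∀ x ∈ Icc a b,
      HasDerivWithinAt v' (v'' x) (Icc a b) x ∧
      HasDerivWithinAt v'' (v''' x) (Icc a b) x ∧
      d * mu * muBar * v''' x
        + (d * (muBar - mu) + mu * muBar * (lam + lamBar + δ)) * v'' x
        + (muBar * (lamBar + δ) - mu * (lam + δ) - d) * v' x
        - δ * v x = -d := by
  have hv : ContinuousOn v (Icc a b) := fun x hx => (hdiff x hx).continuousWithinAt
  have heq_means : ∀ x ∈ Icc a b, d * v' x + (lam + lamBar + δ) * v x =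
      lam * meanAfterClaim mu v x + lamBar * meanAfterPremium muBar v x + d := fun x hx => by
    rw [heq x hx, meanAfterClaim, meanAfterPremium]
    ring
  obtain ⟨v'', v''', h⟩ := exists_third_order_eq_of_relaxation hd hmu hmuBar hdiff
    (fun _ => hasDerivWithinAt_meanAfterClaim h0a hv)
    (fun _ => hasDerivWithinAt_meanAfterPremium htail hv) heq_means
  refine ⟨v'', v''', fun x hx => ?_⟩
  obtain ⟨hv', hv'', third_order⟩ := h x hx
  exact ⟨hv', hv'', by linear_combination third_order⟩

theorem stmt_5 (lam lamBar mu muBar d δ a b : ℝ)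
    (hlam : 0 < lam) (hlamBar : 0 < lamBar) (hmu : 0 < mu) (hmuBar : 0 < muBar)
    (hd : 0 < d) (hδ : 0 < δ) (ha : 0 ≤ a) (hab : a < b)
    (v v' : ℝ → ℝ)
    (hbdd : ∃ M : ℝ, ∀ x, |v x| ≤ M)
    (hmeas : Measurable v)
    (hcont : ContinuousOn v (Set.Ici 0))
    (hdiff : ∀ x ∈ Set.Icc a b, HasDerivWithinAt v (v' x) (Set.Icc a b) x)
    (heq : ∀ x ∈ Set.Icc a b,
      d * v' x + (lam + lamBar + δ) * v x
        = lam / mu * Real.exp (-x / mu) * (∫ u in (0 : ℝ)..x, v u * Real.exp (u / mu))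
          + lamBar / muBar * Real.exp (x / muBar)
              * (∫ u in Set.Ioi x, v u * Real.exp (-u / muBar))
          + d) :
    ∃ v'' v''' : ℝ → ℝ, ∀ x ∈ Set.Icc a b,
      HasDerivWithinAt v' (v'' x) (Set.Icc a b) x ∧
      HasDerivWithinAt v'' (v''' x) (Set.Icc a b) x ∧
      d * mu * muBar * v''' x
        + (d * (muBar - mu) + mu * muBar * (lam + lamBar + δ)) * v'' x
        + (muBar * (lamBar + δ) - mu * (lam + δ) - d) * v' x
        - δ * v x = -d := by
  obtain ⟨M, hM⟩ := hbdd
  exact stmt_5_general hmu.ne' hmuBar.ne' hd.ne'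
    ((hcont.mono Icc_subset_Ici_self).intervalIntegrable_of_Icc ha)
    (integrableOn_Ioi_mul_exp_neg_div hmuBar hmeas.aestronglyMeasurable (.of_forall hM)) hdiff heq
end

section
/- Let λ > 0, λ̄ > 0, μ > 0, μ̄ > 0 with λ̄·μ̄ > λ·μ. Define ψ*(x) = ( λ·(μ+μ̄)/( μ̄·(λ+λ̄) ) )·exp( −( (λ̄·μ̄ − λ·μ)/( μ·μ̄·(λ+λ̄) ) )·x ) for x ≥ 0. Then for every x ≥ 0: (λ+λ̄)·ψ*(x) = (λ/μ)·e^{−x/μ}·∫_0^x ψ*(u)·e^{u/μ} du + λ·e^{−x/μ} + (λ̄/μ̄)·e^{x/μ̄}·∫_x^∞ ψ*(u)·e^{−u/μ̄} du. -/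
open Real Set intervalIntegral

/-!
For exponential claims and premiums, both integral terms of the ruin equation map `exp (-r * x)`
back to a multiple of itself, up to one boundary term in `exp (-x / mu)` coming from the finite
integral. So `C * exp (-r * x)` is a solution as soon as `C = 1 - r * mu`, which makes that boundary
term cancel the inhomogeneity `lam * exp (-x / mu)`, and `r` is a root of the Lundberg equation
`lam * E[exp (r * claim)] + lamBar * E[exp (-r * premium)] = lam + lamBar`, that is,
`lam / (1 - r * mu) + lamBar / (1 + r * muBar) = lam + lamBar`. Its roots are `0` and
`(lamBar * muBar - lam * mu) / (mu * muBar * (lam + lamBar))`.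
-/

/-- The integro-differential equation for the ruin probability `ψ` in the risk model with stochastic
premiums and no dividends, on `[0, ∞)`. Claims (premiums) arrive with intensity `lam` (`lamBar`) and
are exponentially distributed with mean `mu` (`muBar`). -/
def SatisfiesRuinEquation (lam lamBar mu muBar : ℝ) (ψ : ℝ → ℝ) : Prop :=
  ∀ x : ℝ, 0 ≤ x →
    (lam + lamBar) * ψ x
      = lam / mu * exp (-x / mu) * (∫ u in (0 : ℝ)..x, ψ u * exp (u / mu))
        + lam * exp (-x / mu)
        + lamBar / muBar * exp (x / muBar) * ∫ u in Ioi x, ψ u * exp (-u / muBar)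

/-- The adjustment coefficient (Lundberg exponent) of the model: the second root of the Lundberg
equation besides the trivial root `0`. It is the exponential decay rate of the ruin probability. -/
noncomputable def adjustmentCoefficient (lam lamBar mu muBar : ℝ) : ℝ :=
  (lamBar * muBar - lam * mu) / (mu * muBar * (lam + lamBar))

section ExponentialIntegrals

variable {a r : ℝ}

lemma exp_neg_mul_integral_exp_neg_mul_exp (har : a ≠ r) (x : ℝ) :
    exp (-x * a) * ∫ u in (0 : ℝ)..x, exp (-r * u) * exp (u * a)
      = (exp (-r * x) - exp (-x * a)) / (a - r) := by
  have hsub : a - r ≠ 0 := sub_ne_zero.mpr har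
  have hmerge (u : ℝ) : exp (-r * u) * exp (u * a) = exp ((a - r) * u) := by
    rw [← exp_add]; ring_nf
  have hshift : exp (-x * a) * exp ((a - r) * x) = exp (-r * x) := by
    rw [← exp_add]; ring_nf
  simp only [hmerge]
  rw [integral_comp_mul_left exp hsub, integral_exp, mul_zero, exp_zero, smul_eq_mul, ← hshift]
  ring

lemma exp_mul_integral_Ioi_exp_neg_mul_exp_neg (har : 0 < a + r) (x : ℝ) :
    exp (x * a) * ∫ u in Ioi x, exp (-r * u) * exp (-u * a) = exp (-r * x) / (a + r) := by
  have hmerge (u : ℝ) : exp (-r * u) * exp (-u * a) = exp (-(a + r) * u) := by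
    rw [← exp_add]; ring_nf
  have hshift : exp (x * a) * exp (-(a + r) * x) = exp (-r * x) := by
    rw [← exp_add]; ring_nf
  simp only [hmerge]
  rw [integral_exp_mul_Ioi (neg_lt_zero.mpr har), neg_div_neg_eq, ← mul_div_assoc, hshift]

end ExponentialIntegrals

section ExponentialSolution

variable {C r mu muBar x : ℝ} {ψ : ℝ → ℝ}

lemma exp_neg_div_mul_integral_mul_exp_div (hψ : ∀ u ∈ uIcc 0 x, ψ u = C * exp (-r * u))
    (hmu : mu ≠ 0) (hr : 1 - r * mu ≠ 0) :
    exp (-x / mu) * ∫ u in (0 : ℝ)..x, ψ u * exp (u / mu)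
      = C * mu * (exp (-r * x) - exp (-x / mu)) / (1 - r * mu) := by
  have hrate : mu⁻¹ - r = (1 - r * mu) / mu := by field_simp
  have hne : mu⁻¹ ≠ r := sub_ne_zero.mp (hrate ▸ div_ne_zero hr hmu)
  have hcongr : ∫ u in (0 : ℝ)..x, ψ u * exp (u / mu)
      = ∫ u in (0 : ℝ)..x, C * (exp (-r * u) * exp (u * mu⁻¹)) := by
    refine integral_congr fun u hu => ?_
    simp only [hψ u hu, mul_assoc, div_eq_mul_inv]
  rw [hcongr, integral_const_mul, mul_left_comm, div_eq_mul_inv (-x),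
    exp_neg_mul_integral_exp_neg_mul_exp hne, hrate]
  field_simp

lemma exp_div_mul_integral_Ioi_mul_exp_neg_div (hψ : ∀ u ∈ Ioi x, ψ u = C * exp (-r * u))
    (hmuBar : 0 < muBar) (hr : 0 < 1 + r * muBar) :
    exp (x / muBar) * ∫ u in Ioi x, ψ u * exp (-u / muBar)
      = C * muBar * exp (-r * x) / (1 + r * muBar) := by
  have hrate : muBar⁻¹ + r = (1 + r * muBar) / muBar := by field_simp
  have hpos : 0 < muBar⁻¹ + r := hrate ▸ div_pos hr hmuBar
  have hcongr : ∫ u in Ioi x, ψ u * exp (-u / muBar)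
      = ∫ u in Ioi x, C * (exp (-r * u) * exp (-u * muBar⁻¹)) := by
    refine MeasureTheory.setIntegral_congr_fun measurableSet_Ioi fun u hu => ?_
    simp only [hψ u hu, mul_assoc, div_eq_mul_inv]
  rw [hcongr, MeasureTheory.integral_const_mul, mul_left_comm, div_eq_mul_inv x,
    exp_mul_integral_Ioi_exp_neg_mul_exp_neg hpos, hrate]
  field_simp

lemma satisfiesRuinEquation_of_lundberg {lam lamBar : ℝ} (hmu : mu ≠ 0) (hmuBar : 0 < muBar)
    (hclaim : 1 - r * mu ≠ 0) (hpremium : 0 < 1 + r * muBar)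
    (hlundberg : lam / (1 - r * mu) + lamBar / (1 + r * muBar) = lam + lamBar)
    (hψ : ∀ x, 0 ≤ x → ψ x = (1 - r * mu) * exp (-r * x)) :
    SatisfiesRuinEquation lam lamBar mu muBar ψ := by
  intro x hx
  have hψ_claim (u : ℝ) (hu : u ∈ uIcc 0 x) : ψ u = (1 - r * mu) * exp (-r * u) :=
    hψ u (uIcc_of_le hx ▸ hu).1
  have hψ_premium (u : ℝ) (hu : u ∈ Ioi x) : ψ u = (1 - r * mu) * exp (-r * u) :=
    hψ u (hx.trans (le_of_lt hu))
  rw [mul_assoc (lam / mu), mul_assoc (lamBar / muBar),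
    exp_neg_div_mul_integral_mul_exp_div hψ_claim hmu hclaim,
    exp_div_mul_integral_Ioi_mul_exp_neg_div hψ_premium hmuBar hpremium, hψ x hx, ← hlundberg]
  field_simp
  ring

end ExponentialSolution

section AdjustmentCoefficient

variable {lam lamBar mu muBar : ℝ}

lemma one_sub_adjustmentCoefficient_mul (hmu : mu ≠ 0) (hmuBar : muBar ≠ 0)
    (hsum : lam + lamBar ≠ 0) :
    1 - adjustmentCoefficient lam lamBar mu muBar * mu
      = lam * (mu + muBar) / (muBar * (lam + lamBar)) := by
  unfold adjustmentCoefficient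
  field_simp
  ring

lemma one_add_adjustmentCoefficient_mul (hmu : mu ≠ 0) (hmuBar : muBar ≠ 0)
    (hsum : lam + lamBar ≠ 0) :
    1 + adjustmentCoefficient lam lamBar mu muBar * muBar
      = lamBar * (mu + muBar) / (mu * (lam + lamBar)) := by
  unfold adjustmentCoefficient
  field_simp
  ring

lemma lundberg_adjustmentCoefficient (hlam : lam ≠ 0) (hlamBar : lamBar ≠ 0) (hmu : mu ≠ 0)
    (hmuBar : muBar ≠ 0) (hsum : lam + lamBar ≠ 0) (hmean : mu + muBar ≠ 0) :
    lam / (1 - adjustmentCoefficient lam lamBar mu muBar * mu)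
        + lamBar / (1 + adjustmentCoefficient lam lamBar mu muBar * muBar)
      = lam + lamBar := by
  rw [one_sub_adjustmentCoefficient_mul hmu hmuBar hsum,
    one_add_adjustmentCoefficient_mul hmu hmuBar hsum]
  field_simp
  ring

end AdjustmentCoefficient

theorem stmt_14_general {lam lamBar mu muBar : ℝ}
    (hlam : 0 < lam) (hlamBar : 0 < lamBar) (hmu : 0 < mu) (hmuBar : 0 < muBar) {ψ : ℝ → ℝ}
    (hψ : ∀ x : ℝ, 0 ≤ x →
      ψ x = lam * (mu + muBar) / (muBar * (lam + lamBar))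
          * exp (-adjustmentCoefficient lam lamBar mu muBar * x)) :
    SatisfiesRuinEquation lam lamBar mu muBar ψ := by
  have hsum : lam + lamBar ≠ 0 := by positivity
  have hmean : mu + muBar ≠ 0 := by positivity
  have hclaim := one_sub_adjustmentCoefficient_mul hmu.ne' hmuBar.ne' hsum
  have hpremium := one_add_adjustmentCoefficient_mul hmu.ne' hmuBar.ne' hsum
  refine satisfiesRuinEquation_of_lundberg hmu.ne' hmuBar ?_ ?_
    (lundberg_adjustmentCoefficient hlam.ne' hlamBar.ne' hmu.ne' hmuBar.ne' hsum hmean)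
    (hclaim ▸ hψ)
  · rw [hclaim]; positivity
  · rw [hpremium]; positivity

theorem stmt_14 (lam lamBar mu muBar : ℝ)
    (hlam : 0 < lam) (hlamBar : 0 < lamBar) (hmu : 0 < mu) (hmuBar : 0 < muBar)
    (hnet : lamBar * muBar > lam * mu)
    (ψ : ℝ → ℝ)
    (hψ : ∀ x : ℝ, 0 ≤ x →
      ψ x = lam * (mu + muBar) / (muBar * (lam + lamBar))
          * Real.exp (-((lamBar * muBar - lam * mu) / (mu * muBar * (lam + lamBar))) * x)) :
    ∀ x : ℝ, 0 ≤ x →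
      (lam + lamBar) * ψ x
        = lam / mu * Real.exp (-x / mu) * (∫ u in (0 : ℝ)..x, ψ u * Real.exp (u / mu))
          + lam * Real.exp (-x / mu)
          + lamBar / muBar * Real.exp (x / muBar)
              * ∫ u in Set.Ioi x, ψ u * Real.exp (-u / muBar) :=
  stmt_14_general hlam hlamBar hmu hmuBar hψ
end
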